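/- arXiv:1810.09344 — 2 statements merged into one kernel-verified Lean document; each statement's English description precedes it below -/
import Mathlib

section
/- Let V be a real Hilbert space, K a compact subset of V, and let (u^k)_{k≥0} be a weak greedy sequence in K with parameter γ ∈ (0,1]. If for some s > 0 and c0, C0 > 0 the Kolmogorov widths satisfy d_n(K) ≤ C0·e^{-c0·n^s} for all n ≥ 0, then there exist constants C1, c1 > 0 depending only on C0, c0, s and γ such that for every ε > 0, the smallest integer n(ε) with σ_{n(ε)}(K) ≤ ε satisfies n(ε) ≤ C1·(max{ln(1/(c1·ε)), 0})^{1/s}. -/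
/-- The Kolmogorov `n`-width of a set `K` in a real inner product space:
the infimum over all subspaces `E` of dimension at most `n` of the worst-case
distance `‖u - P_E u‖ = infDist u E` over `u ∈ K`. -/
noncomputable def kolWidth {V : Type*} [NormedAddCommGroup V] [InnerProductSpace ℝ V]
    (K : Set V) (n : ℕ) : ℝ :=
  ⨅ E : {E : Submodule ℝ V // Module.rank ℝ E ≤ (n : Cardinal)},
    ⨆ u ∈ K, Metric.infDist u (E.1 : Set V)

/-- The greedy error `σ_n(K) = sup_{x ∈ K} ‖x - P_{V_n} x‖` where
`V_n = span{u^0, …, u^{n-1}}`. -/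
noncomputable def greedyErr {V : Type*} [NormedAddCommGroup V] [InnerProductSpace ℝ V]
    (u : ℕ → V) (K : Set V) (n : ℕ) : ℝ :=
  ⨆ x ∈ K, Metric.infDist x (Submodule.span ℝ (u '' Set.Iio n) : Set V)

/-- `u` is a weak greedy sequence for `K` with parameter `γ`:
`‖u^n - P_{V_n} u^n‖ ≥ γ · σ_n(K)` for all `n`. -/
def IsWeakGreedy {V : Type*} [NormedAddCommGroup V] [InnerProductSpace ℝ V]
    (u : ℕ → V) (K : Set V) (γ : ℝ) : Prop :=
  ∀ n : ℕ, γ * greedyErr u K n ≤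
    Metric.infDist (u n) (Submodule.span ℝ (u '' Set.Iio n) : Set V)


open InnerProductSpace in
lemma hadamard_aux {N : ℕ} (A : Matrix (Fin N) (Fin N) ℝ) :
    |A.det| ≤ ∏ i, ‖(WithLp.toLp 2 (A i) : EuclideanSpace ℝ (Fin N))‖ := by
  have : Fact (Module.finrank ℝ (EuclideanSpace ℝ (Fin N)) = N) := ⟨by simp⟩
  let b := EuclideanSpace.basisFun (Fin N) ℝ
  have h := (b.toBasis.orientation).abs_volumeForm_apply_le
    (fun i => (WithLp.toLp 2 (A i) : EuclideanSpace ℝ (Fin N)))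
  rw [Orientation.volumeForm_robust _ b rfl] at h
  have h2 : b.toBasis.det (fun i => (WithLp.toLp 2 (A i) : EuclideanSpace ℝ (Fin N))) = A.det := by
    rw [Module.Basis.det_apply, ← Matrix.det_transpose]
    congr 1
  rwa [h2] at h

lemma hadamard_inner {V : Type*} [NormedAddCommGroup V] [InnerProductSpace ℝ V] {N : ℕ}
    (e : Fin N → V) (he : Orthonormal ℝ e) (v : Fin N → V) :
    |(Matrix.of fun i j => inner ℝ (e j) (v i)).det| ≤ ∏ i, ‖v i‖ := by
  refine (hadamard_aux _).trans (Finset.prod_le_prod (fun _ _ => norm_nonneg _) fun i _ => ?_)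
  rw [EuclideanSpace.norm_eq]
  refine Real.sqrt_le_iff.2 ⟨norm_nonneg _, ?_⟩
  exact he.sum_inner_products_le (v i) (s := Finset.univ)

lemma vanish_aux {V : Type*} [NormedAddCommGroup V] [InnerProductSpace ℝ V] {N m : ℕ}
    (E : Submodule ℝ V) (hE : Module.rank ℝ E ≤ (m : Cardinal)) (v : Fin N → V)
    (S : Finset (Fin N)) (hS : m < S.card) (hv : ∀ i ∈ S, v i ∈ E) :
    ¬ LinearIndependent ℝ v := by
  intro h
  have h1 : LinearIndependent ℝ (fun i : S => v i) := h.comp _ Subtype.val_injective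
  have h2 : LinearIndependent ℝ (fun i : S => (⟨v i, hv i i.2⟩ : E)) :=
    LinearIndependent.of_comp E.subtype h1
  have h3 := h2.cardinal_lift_le_rank
  have h4 := h3.trans (Cardinal.lift_le.2 hE)
  have : S.card ≤ m := by simpa using h4
  omega

lemma det_bound {V : Type*} [NormedAddCommGroup V] [InnerProductSpace ℝ V] {m : ℕ}
    (e : Fin (2 * m) → V) (he : Orthonormal ℝ e)
    (E : Submodule ℝ V) (hE : Module.rank ℝ E ≤ (m : Cardinal))
    (p q : Fin (2 * m) → V) (hp : ∀ i, p i ∈ E) (B δ : ℝ) (hδ : 0 ≤ δ) (hδB : δ ≤ B)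
    (hpB : ∀ i, ‖p i‖ ≤ B) (hq : ∀ i, ‖q i‖ ≤ δ) :
    |(Matrix.of fun i j => inner ℝ (e j) (p i + q i)).det| ≤ 2 ^ (2 * m) * (B ^ m * δ ^ m) := by
  classical
  have hB : 0 ≤ B := hδ.trans hδB
  let T : V →ₗ[ℝ] (Fin (2 * m) → ℝ) := LinearMap.pi fun j => innerₛₗ ℝ (e j)
  let D : V [⋀^Fin (2 * m)]→ₗ[ℝ] ℝ := (Matrix.detRowAlternating).compLinearMap T
  have hD : ∀ v : Fin (2 * m) → V, D v = (Matrix.of fun i j => inner ℝ (e j) (v i)).det :=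
    fun v => rfl
  have h0 := hD (p + q)
  simp only [Pi.add_apply] at h0
  rw [← h0, AlternatingMap.map_add_univ]
  refine (Finset.abs_sum_le_sum_abs _ _).trans ?_
  have key : ∀ S ∈ (Finset.univ : Finset (Finset (Fin (2 * m)))),
      |D (S.piecewise p q)| ≤ B ^ m * δ ^ m := by
    intro S _
    by_cases hS : m < S.card
    · rw [AlternatingMap.map_linearDependent]
      · simp; positivity
      · refine vanish_aux E hE _ S hS fun i hi => ?_
        rw [Finset.piecewise_eq_of_mem _ _ _ hi]; exact hp i
    · push Not at hS
      rw [hD]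
      refine (hadamard_inner e he _).trans ?_
      rw [← Finset.prod_mul_prod_compl S]
      have h1 : ∏ i ∈ S, ‖S.piecewise p q i‖ ≤ B ^ S.card := by
        rw [← Finset.prod_const]
        refine Finset.prod_le_prod ?_ ?_ <;> intro i hi
        · exact norm_nonneg _
        · rw [Finset.piecewise_eq_of_mem _ _ _ hi]; exact hpB i
      have h2 : ∏ i ∈ Sᶜ, ‖S.piecewise p q i‖ ≤ δ ^ Sᶜ.card := by
        rw [← Finset.prod_const]
        refine Finset.prod_le_prod ?_ ?_ <;> intro i hi
        · exact norm_nonneg _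
        · rw [Finset.piecewise_eq_of_notMem _ _ _ (by simpa using hi)]; exact hq i
      obtain ⟨k, hk⟩ := Nat.exists_eq_add_of_le hS
      have hc : Sᶜ.card = m + k := by
        rw [Finset.card_compl, Fintype.card_fin]; omega
      calc _ ≤ B ^ S.card * δ ^ Sᶜ.card := by
            refine mul_le_mul h1 h2 (Finset.prod_nonneg fun _ _ => norm_nonneg _) (by positivity)
        _ = B ^ S.card * δ ^ m * δ ^ k := by rw [hc, pow_add]; ring
        _ ≤ B ^ S.card * δ ^ m * B ^ k := by gcongr
        _ = B ^ m * δ ^ m := by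
            conv_rhs => rw [hk, pow_add]
            rw [← hk]; ring
  refine (Finset.sum_le_sum key).trans ?_
  simp

lemma greedy_core {V : Type*} [NormedAddCommGroup V] [InnerProductSpace ℝ V] (u : ℕ → V) (m : ℕ)
    (E : Submodule ℝ V) (hE : Module.rank ℝ E ≤ (m : Cardinal)) (B δ t : ℝ) (hδ : 0 ≤ δ)
    (hδB : δ ≤ B) (hu : ∀ i, ‖u i‖ ≤ B) (huE : ∀ i, Metric.infDist (u i) (E : Set V) ≤ δ)
    (ht : 0 < t) (htu : ∀ i < 2 * m,
      t ≤ Metric.infDist (u i) (Submodule.span ℝ (u '' Set.Iio i) : Set V)) :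
    t ^ (2 * m) ≤ 2 ^ (2 * m) * (B ^ m * δ ^ m) := by
  have : FiniteDimensional ℝ E :=
    Module.rank_lt_aleph0_iff.1 (hE.trans_lt (Cardinal.natCast_lt_aleph0))
  let g := InnerProductSpace.gramSchmidt ℝ u
  have hg : ∀ i < 2 * m, t ≤ ‖g i‖ := by
    intro i hi
    refine (htu i hi).trans ?_
    have hmem : u i - g i ∈ Submodule.span ℝ (u '' Set.Iio i) := by
      rw [← InnerProductSpace.span_gramSchmidt_Iio ℝ u i]
      have := InnerProductSpace.gramSchmidt_def'' ℝ u i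
      rw [sub_eq_iff_eq_add'.2 this]
      refine Submodule.sum_mem _ fun k hk => Submodule.smul_mem _ _ (Submodule.subset_span ⟨k, ?_, rfl⟩)
      simpa using hk
    refine (Metric.infDist_le_dist_of_mem hmem).trans ?_
    rw [dist_eq_norm]; simp
  let e : Fin (2 * m) → V := fun i => (‖g i‖)⁻¹ • g i
  have hgp : ∀ i : Fin (2 * m), 0 < ‖g i‖ := fun i => ht.trans_le (hg i i.2)
  have he : Orthonormal ℝ e := by
    constructor
    · intro i
      simp only [e, norm_smul, norm_inv, norm_norm]
      exact inv_mul_cancel₀ (hgp i).ne'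
    · intro i j hij
      simp only [e, inner_smul_left, inner_smul_right]
      rw [InnerProductSpace.gramSchmidt_orthogonal ℝ u (fun h => hij (Fin.ext h))]
      simp
  have hb := det_bound e he E hE (fun i => E.starProjection (u i))
    (fun i => u i - E.starProjection (u i)) (fun i => by simp) B δ hδ hδB
    (fun i => (E.norm_starProjection_apply_le _).trans (hu i)) (fun i => by
      refine le_trans (le_of_eq ?_) (huE i)
      rw [Submodule.starProjection_minimal, Metric.infDist_eq_iInf]
      simp [dist_eq_norm])
  simp only [add_sub_cancel] at hb
  rw [Matrix.det_of_isLowerTriangular] at hb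
  · refine le_trans ?_ hb
    rw [Finset.abs_prod]
    have : ∏ i : Fin (2 * m), t = t ^ (2 * m) := by simp
    rw [← this]
    refine Finset.prod_le_prod (fun _ _ => ht.le) fun i _ => ?_
    refine (hg i i.2).trans ?_
    refine le_trans (le_of_eq ?_) (le_abs_self _)
    have h3 : inner ℝ (g i) (u i) = ‖g i‖ ^ 2 := by
      rw [InnerProductSpace.gramSchmidt_def'' ℝ u i, inner_add_right, inner_sum,
        Finset.sum_eq_zero, add_zero, real_inner_self_eq_norm_sq]
      intro k hk
      rw [inner_smul_right, InnerProductSpace.gramSchmidt_orthogonal ℝ u, mul_zero]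
      exact (Finset.mem_Iio.1 hk).ne'
    simp only [Matrix.of_apply, e, inner_smul_left]
    rw [h3]
    have := (hgp i).ne'
    simp; field_simp
  · intro i j hij
    simp only [Matrix.of_apply, e, inner_smul_left]
    rw [InnerProductSpace.gramSchmidt_inv_triangular ℝ u, mul_zero]
    simpa using hij

lemma le_biSup_infDist {V : Type*} [NormedAddCommGroup V] [InnerProductSpace ℝ V] {K : Set V}
    (hK : IsCompact K) (E : Submodule ℝ V) {x : V} (hx : x ∈ K) :
    Metric.infDist x (E : Set V) ≤ ⨆ y ∈ K, Metric.infDist y (E : Set V) := by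
  obtain ⟨R, hR⟩ := hK.isBounded.exists_norm_le
  have hR0 : 0 ≤ R := (norm_nonneg x).trans (hR x hx)
  have hb : BddAbove (Set.range fun y => ⨆ (_ : y ∈ K), Metric.infDist y (E : Set V)) := by
    refine ⟨R, ?_⟩
    rintro _ ⟨y, rfl⟩
    refine Real.iSup_le (fun hy => ?_) hR0
    refine (Metric.infDist_le_dist_of_mem E.zero_mem).trans ?_
    simpa using hR y hy
  have := le_ciSup hb x
  simpa only [ciSup_pos hx] using this

lemma exists_of_kolWidth_lt {V : Type*} [NormedAddCommGroup V] [InnerProductSpace ℝ V] {K : Set V}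
    (hK : IsCompact K) (n : ℕ) (δ : ℝ) (h : kolWidth K n < δ) :
    ∃ E : Submodule ℝ V, Module.rank ℝ E ≤ (n : Cardinal) ∧
      ∀ x ∈ K, Metric.infDist x (E : Set V) ≤ δ := by
  have : Nonempty {E : Submodule ℝ V // Module.rank ℝ E ≤ (n : Cardinal)} := ⟨⟨⊥, by simp⟩⟩
  obtain ⟨E, hE⟩ := exists_lt_of_ciInf_lt h
  exact ⟨E.1, E.2, fun x hx => (le_biSup_infDist hK E.1 hx).trans hE.le⟩

lemma greedyErr_anti {V : Type*} [NormedAddCommGroup V] [InnerProductSpace ℝ V] {K : Set V}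
    (hK : IsCompact K) (u : ℕ → V) {i n : ℕ} (h : i ≤ n) :
    greedyErr u K n ≤ greedyErr u K i := by
  have h0 : 0 ≤ greedyErr u K i :=
    Real.iSup_nonneg fun x => Real.iSup_nonneg fun _ => Metric.infDist_nonneg
  refine Real.iSup_le (fun x => Real.iSup_le (fun hx => ?_) h0) h0
  refine le_trans ?_ (le_biSup_infDist hK _ hx)
  refine Metric.infDist_le_infDist_of_subset ?_ ⟨0, Submodule.zero_mem _⟩
  exact Submodule.span_mono (Set.image_mono (Set.Iio_subset_Iio h))

lemma greedy_rate {V : Type*} [NormedAddCommGroup V] [InnerProductSpace ℝ V] {K : Set V}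
    (hK : IsCompact K) (u : ℕ → V) (hu : ∀ n, u n ∈ K) (c0 C0 s γ : ℝ) (hc0 : 0 < c0)
    (hC0 : 0 < C0) (hs : 0 < s) (hγ : 0 < γ) (hγ1 : γ ≤ 1) (hw : IsWeakGreedy u K γ)
    (hd : ∀ n : ℕ, kolWidth K n ≤ C0 * Real.exp (-(c0 * (n : ℝ) ^ s))) (m : ℕ) :
    greedyErr u K (2 * m) ≤ 4 * C0 / γ * Real.exp (-(c0 / 2 * (m : ℝ) ^ s)) := by
  have hlt : ∀ n : ℕ, kolWidth K n < 2 * C0 * Real.exp (-(c0 * (n : ℝ) ^ s)) := fun n =>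
    (hd n).trans_lt (by nlinarith [Real.exp_pos (-(c0 * (n : ℝ) ^ s))])
  have hB : ∀ x ∈ K, ‖x‖ ≤ 2 * C0 := by
    obtain ⟨E, hE, h⟩ := exists_of_kolWidth_lt hK 0 _ (hlt 0)
    have hE0 : E = ⊥ := by
      rw [← Submodule.rank_eq_zero]
      simpa using hE
    intro x hx
    have := h x hx
    subst hE0
    simpa [Real.zero_rpow hs.ne'] using this
  rcases Nat.eq_zero_or_pos m with rfl | hm
  · simp only [mul_zero, Nat.cast_zero, Real.zero_rpow hs.ne', neg_zero, Real.exp_zero, mul_one]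
    have h2 : 2 * C0 ≤ 4 * C0 / γ := by
      rw [le_div_iff₀ hγ]; nlinarith
    refine le_trans ?_ h2
    refine Real.iSup_le (fun x => Real.iSup_le (fun hx => ?_) (by positivity)) (by positivity)
    refine (Metric.infDist_le_dist_of_mem (Submodule.zero_mem _)).trans ?_
    simpa using hB x hx
  obtain ⟨E, hE, h⟩ := exists_of_kolWidth_lt hK m _ (hlt m)
  rcases le_or_gt (greedyErr u K (2 * m)) 0 with h0 | h0
  · exact h0.trans (by positivity)
  have hc := greedy_core u m E hE (2 * C0) (2 * C0 * Real.exp (-(c0 * (m : ℝ) ^ s)))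
    (γ * greedyErr u K (2 * m)) (by positivity) (by
      have : Real.exp (-(c0 * (m : ℝ) ^ s)) ≤ 1 := by
        rw [Real.exp_le_one_iff]
        have : 0 ≤ c0 * (m : ℝ) ^ s := by positivity
        linarith
      nlinarith) (fun i => hB _ (hu i)) (fun i => h _ (hu i)) (by positivity) (fun i hi => by
      refine le_trans ?_ (hw i)
      exact mul_le_mul_of_nonneg_left (greedyErr_anti hK u hi.le) hγ.le)
  have he : Real.exp (-(c0 * (m : ℝ) ^ s)) = Real.exp (-(c0 / 2 * (m : ℝ) ^ s)) ^ 2 := by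
    rw [← Real.exp_nat_mul]; congr 1; push_cast; ring
  have hr : (2 : ℝ) ^ (2 * m) * ((2 * C0) ^ m * (2 * C0 * Real.exp (-(c0 * (m : ℝ) ^ s))) ^ m)
      = (4 * C0 * Real.exp (-(c0 / 2 * (m : ℝ) ^ s))) ^ (2 * m) := by
    rw [he, pow_mul, pow_mul, ← mul_pow, ← mul_pow]; congr 1; ring
  rw [hr] at hc
  have := le_of_pow_le_pow_left₀ (by omega) (by positivity) hc
  rw [div_mul_eq_mul_div, le_div_iff₀ hγ]
  linarith

universe u

theorem statement4 (c0 C0 s γ : ℝ) (hc0 : 0 < c0) (hC0 : 0 < C0) (hs : 0 < s)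
    (hγ : γ ∈ Set.Ioc (0 : ℝ) 1) :
    ∃ C1 c1 : ℝ, 0 < C1 ∧ 0 < c1 ∧
      ∀ (V : Type u) [NormedAddCommGroup V] [InnerProductSpace ℝ V] [CompleteSpace V]
        (K : Set V), IsCompact K →
        ∀ u : ℕ → V, (∀ n, u n ∈ K) → IsWeakGreedy u K γ →
        (∀ n : ℕ, kolWidth K n ≤ C0 * Real.exp (-(c0 * (n : ℝ) ^ s))) →
        ∀ ε : ℝ, 0 < ε →
          {n : ℕ | greedyErr u K n ≤ ε}.Nonempty ∧
          ((sInf {n : ℕ | greedyErr u K n ≤ ε} : ℕ) : ℝ) ≤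
            C1 * (max (Real.log (1 / (c1 * ε))) 0) ^ (1 / s) := by
  obtain ⟨hγ0, hγ1⟩ := hγ
  set A := 4 * C0 / γ with hA
  have hA0 : 0 < A := by positivity
  refine ⟨2 * ((2 / c0) ^ (1 / s) + 1), 1 / (A * Real.exp 1), by positivity, by positivity, ?_⟩
  intro V _ _ _ K hK u hu hw hd ε hε
  have hrate := greedy_rate hK u hu c0 C0 s γ hc0 hC0 hs hγ0 hγ1 hw hd
  rcases le_or_gt A ε with h | h
  · have h0 : (0 : ℕ) ∈ {n : ℕ | greedyErr u K n ≤ ε} := by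
      have := hrate 0
      simp only [mul_zero, Nat.cast_zero, Real.zero_rpow hs.ne', neg_zero, Real.exp_zero,
        mul_one] at this
      exact this.trans h
    refine ⟨⟨0, h0⟩, ?_⟩
    rw [Nat.sInf_eq_zero.2 (Or.inl h0), Nat.cast_zero]
    positivity
  · have hlog : Real.log (1 / (1 / (A * Real.exp 1) * ε)) = Real.log (A / ε) + 1 := by
      have : 1 / (1 / (A * Real.exp 1) * ε) = A / ε * Real.exp 1 := by field_simp
      rw [this, Real.log_mul (by positivity) (Real.exp_pos 1).ne', Real.log_exp]
    have hlp : 0 ≤ Real.log (A / ε) := Real.log_nonneg ((one_le_div hε).2 h.le)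
    rw [hlog, max_eq_left (by linarith)]
    set L := Real.log (A / ε) + 1 with hL
    have hL1 : 1 ≤ L := by linarith
    set x := (2 / c0 * L) ^ (1 / s) with hx
    have hx0 : 0 ≤ x := by positivity
    have hmem : 2 * ⌈x⌉₊ ∈ {n : ℕ | greedyErr u K n ≤ ε} := by
      refine (hrate _).trans ?_
      have h1 : 2 / c0 * L ≤ (⌈x⌉₊ : ℝ) ^ s := by
        have h2 : x ^ s = 2 / c0 * L := by
          rw [hx, ← Real.rpow_mul (by positivity), one_div_mul_cancel hs.ne', Real.rpow_one]
        rw [← h2]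
        exact Real.rpow_le_rpow hx0 (Nat.le_ceil x) hs.le
      have h3 : Real.log (A / ε) ≤ c0 / 2 * (⌈x⌉₊ : ℝ) ^ s := by
        have := mul_le_mul_of_nonneg_left h1 (by positivity : 0 ≤ c0 / 2)
        have h4 : c0 / 2 * (2 / c0 * L) = L := by field_simp
        linarith
      calc A * Real.exp (-(c0 / 2 * (⌈x⌉₊ : ℝ) ^ s)) ≤ A * Real.exp (-Real.log (A / ε)) := by
            gcongr
        _ = ε := by
            rw [Real.exp_neg, Real.exp_log (by positivity)]; field_simp
    refine ⟨⟨_, hmem⟩, ?_⟩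
    have h5 : ((sInf {n : ℕ | greedyErr u K n ≤ ε} : ℕ) : ℝ) ≤ ((2 * ⌈x⌉₊ : ℕ) : ℝ) :=
      Nat.cast_le.2 (Nat.sInf_le hmem)
    refine h5.trans ?_
    have h6 : (⌈x⌉₊ : ℝ) ≤ x + 1 := (Nat.ceil_lt_add_one hx0).le
    have h7 : x = (2 / c0) ^ (1 / s) * L ^ (1 / s) := Real.mul_rpow (by positivity) (by positivity)
    have h8 : 1 ≤ L ^ (1 / s) := Real.one_le_rpow hL1 (by positivity)
    push_cast
    nlinarith
end

section
/- Let V be a real Hilbert space, Λ ⊂ ℕ^d a downward closed set of cardinality m ≥ 1, and P ∈ P_Λ a nonzero V-valued polynomial with M1 := sup_{y∈Y} ‖P(y)‖. Then ρ({ y ∈ Y : ‖P(y)‖ ≥ M1/(2m) }) ≥ 3/(4m²), where Y = [−1,1]^d and ρ is the uniform probability measure on Y. -/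
open MeasureTheory

/-- The parameter cube `Y = [-1,1]^d`. -/
def cube (d : ℕ) : Set (Fin d → ℝ) := Set.univ.pi fun _ => Set.Icc (-1 : ℝ) 1

/-- A finite set `Λ ⊂ ℕ^d` is downward closed if `ν ∈ Λ` and `μ ≤ ν` (componentwise)
imply `μ ∈ Λ`. -/
def DownwardClosed {d : ℕ} (Λ : Finset (Fin d → ℕ)) : Prop :=
  ∀ ν ∈ Λ, ∀ μ : Fin d → ℕ, μ ≤ ν → μ ∈ Λ

/-- The `V`-valued polynomial `y ↦ ∑_{ν ∈ Λ} y^ν • a_ν`, with `y^ν = ∏_j y_j^{ν_j}`. -/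
noncomputable def polyEval {d : ℕ} {V : Type*} [AddCommGroup V] [Module ℝ V]
    (Λ : Finset (Fin d → ℕ)) (a : (Fin d → ℕ) → V) (y : Fin d → ℝ) : V :=
  ∑ ν ∈ Λ, (∏ j, y j ^ ν j) • a ν

/-- `δ_m(v)`: the error of best uniform approximation of `v` on `Y = [-1,1]^d`
by `V`-valued polynomials supported on a downward closed index set of cardinality `m`. -/
noncomputable def deltaApprox {d : ℕ} {V : Type*} [NormedAddCommGroup V] [Module ℝ V]
    (v : (Fin d → ℝ) → V) (m : ℕ) : ℝ :=
  sInf { e | ∃ (Λ : Finset (Fin d → ℕ)) (a : (Fin d → ℕ) → V),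
    DownwardClosed Λ ∧ Λ.card = m ∧ e = ⨆ y ∈ cube d, ‖v y - polyEval Λ a y‖ }

/-- Membership in the approximation class `A^r`: `δ_m(v) ≤ C m^{-r}` for all `m ≥ 1`. -/
def MemA {d : ℕ} {V : Type*} [NormedAddCommGroup V] [Module ℝ V]
    (r : ℝ) (v : (Fin d → ℝ) → V) : Prop :=
  ∃ C : ℝ, 0 ≤ C ∧ ∀ m : ℕ, 1 ≤ m → deltaApprox v m ≤ C * (m : ℝ) ^ (-r)

/-- The seminorm `|v|_{A^r}`: the smallest constant `C ≥ 0` with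
`δ_m(v) ≤ C m^{-r}` for all `m ≥ 1`. -/
noncomputable def semiA {d : ℕ} {V : Type*} [NormedAddCommGroup V] [Module ℝ V]
    (r : ℝ) (v : (Fin d → ℝ) → V) : ℝ :=
  sInf { C | 0 ≤ C ∧ ∀ m : ℕ, 1 ≤ m → deltaApprox v m ≤ C * (m : ℝ) ^ (-r) }

/-- The norm `‖v‖_{A^r} = max{‖v‖_{L^∞(Y,V)}, |v|_{A^r}}`. -/
noncomputable def normA {d : ℕ} {V : Type*} [NormedAddCommGroup V] [Module ℝ V]
    (r : ℝ) (v : (Fin d → ℝ) → V) : ℝ :=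
  max (⨆ y ∈ cube d, ‖v y‖) (semiA r v)

/-- The uniform probability measure on the cube `Y = [-1,1]^d`. -/
noncomputable def uniformCube (d : ℕ) : Measure (Fin d → ℝ) :=
  Measure.pi fun _ => (2 : ENNReal)⁻¹ • (volume.restrict (Set.Icc (-1 : ℝ) 1))

/-- Integration over `[0,1]` of real polynomials. -/
noncomputable def polyInt (p : Polynomial ℝ) : ℝ := ∫ x in (0:ℝ)..1, p.eval x

lemma polyInt_add (p q : Polynomial ℝ) : polyInt (p + q) = polyInt p + polyInt q := by
  unfold polyInt
  simp only [Polynomial.eval_add]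
  exact intervalIntegral.integral_add (p.continuous.intervalIntegrable _ _)
    (q.continuous.intervalIntegrable _ _)

lemma polyInt_C_mul (c : ℝ) (p : Polynomial ℝ) :
    polyInt (Polynomial.C c * p) = c * polyInt p := by
  unfold polyInt
  simp

lemma polyInt_derivative (p : Polynomial ℝ) :
    polyInt (Polynomial.derivative p) = p.eval 1 - p.eval 0 := by
  unfold polyInt
  exact intervalIntegral.integral_eq_sub_of_hasDerivAt (fun x _ => p.hasDerivAt x)
    ((Polynomial.derivative p).continuous.intervalIntegrable _ _)

lemma polyInt_sum {ι : Type*} (s : Finset ι) (f : ι → Polynomial ℝ) :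
    polyInt (∑ i ∈ s, f i) = ∑ i ∈ s, polyInt (f i) := by
  classical
  induction s using Finset.induction_on with
  | empty => simp [polyInt]
  | insert a s ha ih => rw [Finset.sum_insert ha, Finset.sum_insert ha, polyInt_add, ih]

/-- Real shifted Legendre polynomial. -/
noncomputable def leg (n : ℕ) : Polynomial ℝ :=
  (Polynomial.shiftedLegendre n).map (Int.castRingHom ℝ)

lemma leg_coeff (n k : ℕ) :
    (leg n).coeff k = (-1) ^ k * (n.choose k) * ((n + k).choose n) := by
  simp [leg, Polynomial.coeff_shiftedLegendre]

lemma leg_natDegree (n : ℕ) : (leg n).natDegree = n := by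
  unfold leg
  rw [Polynomial.natDegree_map_eq_of_injective (by exact Int.cast_injective)]
  simp

lemma leg_coeff_succ (n k : ℕ) :
    ((k : ℝ) + 1) ^ 2 * (leg n).coeff (k + 1)
      = ((k : ℝ) * (k + 1) - n * (n + 1)) * (leg n).coeff k := by
  have h1 : ((n.choose (k+1) : ℝ)) * (k + 1) = n.choose k * ((n : ℝ) - k) := by
    rcases le_or_gt k n with h | h
    · have := Nat.choose_succ_right_eq n k
      rw [← Nat.cast_sub h]
      exact_mod_cast this
    · rw [Nat.choose_eq_zero_of_lt h, Nat.choose_eq_zero_of_lt (by omega)]; simp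
  have h2 : (((n + (k+1)).choose n : ℝ)) * (k + 1) = (n + k).choose n * ((n : ℝ) + k + 1) := by
    have := Nat.choose_mul_succ_eq (n + k) n
    have e : n + k + 1 - n = k + 1 := by omega
    rw [e] at this
    have : (((n + k).choose n : ℝ)) * ((n : ℝ) + k + 1) = ((n + k + 1).choose n) * (k + 1) := by
      exact_mod_cast this
    rw [this, add_assoc]
  rw [leg_coeff, leg_coeff]
  calc _ = (-1) ^ (k+1) * (((n.choose (k+1) : ℝ)) * (k + 1)) *
        ((((n + (k+1)).choose n : ℝ)) * (k + 1)) := by ring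
    _ = _ := by rw [h1, h2]; ring

open Polynomial in
lemma leg_ode (n : ℕ) :
    derivative ((X - X ^ 2) * derivative (leg n)) = - (C ((n : ℝ) * (n + 1)) * leg n) := by
  ext k
  rw [coeff_derivative, coeff_neg, coeff_C_mul, sub_mul, coeff_sub, coeff_X_mul]
  have := leg_coeff_succ n k
  rcases k with _ | k
  · have e : (X ^ 2 * derivative (leg n)).coeff (0 + 1) = 0 := by
      rw [pow_two, mul_assoc, coeff_X_mul]; simp
    rw [e, coeff_derivative]
    push_cast at *
    linear_combination this
  · have e : (X ^ 2 * derivative (leg n)).coeff (k + 1 + 1) = (derivative (leg n)).coeff k := by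
      rw [pow_two, mul_assoc, coeff_X_mul, coeff_X_mul]
    rw [e, coeff_derivative, coeff_derivative]
    push_cast at *
    linear_combination this

open Polynomial in
lemma leg_orth {n m : ℕ} (h : n ≠ m) : polyInt (leg n * leg m) = 0 := by
  have key : derivative ((X - X ^ 2) * derivative (leg n) * leg m
        + C (-1) * ((X - X ^ 2) * derivative (leg m) * leg n))
      = C ((m : ℝ) * (m + 1) - n * (n + 1)) * (leg n * leg m) := by
    rw [derivative_add, derivative_mul (f := (X - X ^ 2) * derivative (leg n)), leg_ode,
      derivative_C_mul,
      derivative_mul (f := (X - X ^ 2) * derivative (leg m)), leg_ode, C_sub, C_neg, C_1]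
    ring
  have h1 := polyInt_derivative ((X - X ^ 2) * derivative (leg n) * leg m
        + C (-1) * ((X - X ^ 2) * derivative (leg m) * leg n))
  rw [key, polyInt_C_mul] at h1
  simp at h1
  rcases h1 with h1 | h1
  · exfalso
    have h2 : ((m : ℝ) - n) * (m + n + 1) = 0 := by linear_combination h1
    rcases mul_eq_zero.1 h2 with h3 | h3
    · exact h (by exact_mod_cast (sub_eq_zero.1 h3).symm)
    · have : (0 : ℝ) < m + n + 1 := by positivity
      linarith
  · exact h1

open Polynomial in
lemma leg_span (n : ℕ) : ∀ p : Polynomial ℝ, p.natDegree ≤ n →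
    ∃ c : ℕ → ℝ, p = ∑ k ∈ Finset.range (n + 1), C (c k) * leg k := by
  have hlead : ∀ n, (leg n).coeff n ≠ 0 := by
    intro n
    rw [leg_coeff]
    have : ((n + n).choose n : ℝ) ≠ 0 := by
      exact_mod_cast (Nat.choose_pos (by omega)).ne'
    simp [this]
  induction n with
  | zero =>
    intro p hp
    refine ⟨fun _ => p.coeff 0 / (leg 0).coeff 0, ?_⟩
    rw [Finset.sum_range_one]
    nth_rw 1 [eq_C_of_natDegree_le_zero hp]
    nth_rw 2 [eq_C_of_natDegree_le_zero (leg_natDegree 0).le]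
    rw [← C_mul, div_mul_cancel₀ _ (hlead 0)]
  | succ n ih =>
    intro p hp
    obtain ⟨c, hc⟩ := ih (p - C (p.coeff (n+1) / (leg (n+1)).coeff (n+1)) * leg (n+1)) (by
      rw [natDegree_le_iff_coeff_eq_zero]
      intro N hN
      rw [coeff_sub, coeff_C_mul]
      rcases Nat.lt_or_ge (n+1) N with h | h
      · rw [coeff_eq_zero_of_natDegree_lt (lt_of_le_of_lt hp h),
          coeff_eq_zero_of_natDegree_lt (p := leg (n+1)) (n := N) (by rw [leg_natDegree]; exact h)]
        simp
      · have : N = n + 1 := by omega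
        subst this
        rw [div_mul_cancel₀ _ (hlead _), sub_self])
    refine ⟨fun k => if k = n + 1 then p.coeff (n+1) / (leg (n+1)).coeff (n+1) else c k, ?_⟩
    rw [Finset.sum_range_succ]
    rw [sub_eq_iff_eq_add] at hc
    refine hc.trans ?_
    congr 1
    · apply Finset.sum_congr rfl
      intro k hk
      rw [Finset.mem_range] at hk
      simp only
      rw [if_neg (by omega)]
    · simp

open Polynomial in
lemma leg_orth_lt {n : ℕ} (p : Polynomial ℝ) (hp : p.natDegree < n) :
    polyInt (p * leg n) = 0 := by
  obtain ⟨c, hc⟩ := leg_span (n - 1) p (by omega)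
  rw [hc, Finset.sum_mul, polyInt_sum]
  apply Finset.sum_eq_zero
  intro k hk
  rw [Finset.mem_range] at hk
  rw [mul_assoc, polyInt_C_mul, leg_orth (by omega), mul_zero]

lemma leg_eval_zero (n : ℕ) : (leg n).eval 0 = 1 := by
  rw [← Polynomial.coeff_zero_eq_eval_zero, leg_coeff]; simp

lemma leg_eval_symm (n : ℕ) (x : ℝ) : (leg n).eval x = (-1) ^ n * (leg n).eval (1 - x) := by
  have := Polynomial.shiftedLegendre_eval_symm n x
  simpa [leg, Polynomial.eval_map, Polynomial.aeval_def] using this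

lemma leg_eval_symm_sq (n : ℕ) (x : ℝ) : (leg n).eval x ^ 2 = (leg n).eval (1 - x) ^ 2 := by
  rw [leg_eval_symm n x, mul_pow, ← pow_mul, mul_comm n 2, pow_mul]; simp

lemma leg_eval_one_sq (n : ℕ) : (leg n).eval 1 ^ 2 = 1 := by
  rw [leg_eval_symm_sq, sub_self, leg_eval_zero, one_pow]

open Polynomial in
lemma leg_norm (n : ℕ) : (2 * (n : ℝ) + 1) * polyInt (leg n * leg n) = 1 := by
  have key : derivative (X * (leg n * leg n)) = C (2 * (n : ℝ) + 1) * (leg n * leg n)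
      + C 2 * ((X * derivative (leg n) - C (n : ℝ) * leg n) * leg n) := by
    rw [derivative_mul, derivative_mul, derivative_X, C_add, C_mul, C_1]
    simp only [map_ofNat]
    ring
  have h1 := polyInt_derivative (X * (leg n * leg n))
  rw [key, polyInt_add, polyInt_C_mul, polyInt_C_mul] at h1
  have h0 : polyInt ((X * derivative (leg n) - C (n : ℝ) * leg n) * leg n) = 0 := by
    rcases Nat.eq_zero_or_pos n with rfl | hn
    · have : derivative (leg 0) = 0 := derivative_of_natDegree_zero (leg_natDegree 0)
      rw [this]; simp [polyInt]
    · apply leg_orth_lt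
      suffices h : (X * derivative (leg n) - C (n : ℝ) * leg n).natDegree ≤ n - 1 by omega
      rw [natDegree_le_iff_coeff_eq_zero]
      intro N hN
      obtain ⟨N, rfl⟩ : ∃ M, N = M + 1 := ⟨N - 1, by omega⟩
      rw [coeff_sub, coeff_C_mul, coeff_X_mul, coeff_derivative]
      rcases Nat.lt_or_ge n (N+1) with h | h
      · rw [coeff_eq_zero_of_natDegree_lt (by rw [leg_natDegree]; exact h)]
        simp
      · have : n = N + 1 := by omega
        subst this
        push_cast; ring
  rw [h0] at h1
  have := leg_eval_one_sq n
  simp at h1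
  rw [h1]; linear_combination this

open Polynomial in
lemma leg_bound_half (n : ℕ) (x : ℝ) (hx0 : 0 ≤ x) (hx : x ≤ 1 / 2) :
    (leg n).eval x ^ 2 ≤ 1 := by
  rcases Nat.eq_zero_or_pos n with rfl | hn
  · have : leg 0 = C 1 := by
      rw [eq_C_of_natDegree_le_zero (leg_natDegree 0).le, leg_coeff]; simp
    rw [this]; simp
  set N : ℝ := (n : ℝ) * (n + 1) with hN
  have hNpos : 0 < N := by positivity
  set g : Polynomial ℝ := C N * (leg n) ^ 2 + ((X - X ^ 2) * derivative (leg n)) * derivative (leg n)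
    with hg
  have hder : derivative g = - ((1 - C 2 * X) * (derivative (leg n)) ^ 2) := by
    have ode := leg_ode n
    have ode2 : (X - X ^ 2) * derivative (derivative (leg n)) =
        - (C N * leg n) - (1 - C 2 * X) * derivative (leg n) := by
      rw [hN, ← ode, derivative_mul]
      simp only [derivative_sub, derivative_X, derivative_X_pow, map_ofNat, Nat.cast_ofNat]
      ring
    rw [hg, derivative_add, derivative_mul (f := (X - X ^ 2) * derivative (leg n)), ode,
      derivative_C_mul, derivative_pow]
    have : (X - X ^ 2) * derivative (leg n) * derivative (derivative (leg n)) =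
       derivative (leg n) * ((X - X ^ 2) * derivative (derivative (leg n))) := by ring
    rw [this, ode2, ← hN]
    simp only [map_ofNat, Nat.cast_ofNat]
    ring
  have hanti : AntitoneOn (fun x => g.eval x) (Set.Icc 0 (1/2)) := by
    apply antitoneOn_of_deriv_nonpos (convex_Icc _ _) g.continuous.continuousOn
      g.differentiable.differentiableOn
    intro y hy
    rw [interior_Icc] at hy
    rw [Polynomial.deriv, hder]
    simp
    have : 0 ≤ 1 - 2 * y := by linarith [hy.2]
    positivity
  have h := hanti (Set.mem_Icc.2 ⟨le_refl 0, by norm_num⟩) (Set.mem_Icc.2 ⟨hx0, hx⟩) hx0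
  simp [hg, leg_eval_zero] at h
  have h2 : 0 ≤ (x - x ^ 2) * (derivative (leg n)).eval x * (derivative (leg n)).eval x := by
    rw [mul_assoc]
    apply mul_nonneg
    · nlinarith
    · exact mul_self_nonneg _
  have h3 : N * (leg n).eval x ^ 2 ≤ N * 1 := by linarith
  exact le_of_mul_le_mul_left h3 hNpos

lemma leg_bound (n : ℕ) (x : ℝ) (hx0 : 0 ≤ x) (hx : x ≤ 1) : (leg n).eval x ^ 2 ≤ 1 := by
  rcases le_total x (1/2) with h | h
  · exact leg_bound_half n x hx0 h
  · rw [leg_eval_symm_sq]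
    exact leg_bound_half n _ (by linarith) (by linarith)

/-- The uniform probability measure on `[-1,1]`. -/
noncomputable def rho1 : Measure ℝ := (2 : ENNReal)⁻¹ • (volume.restrict (Set.Icc (-1 : ℝ) 1))

/-- orthonormal Legendre functions on `[-1,1]`. -/
noncomputable def onb (n : ℕ) (y : ℝ) : ℝ := √(2 * n + 1) * (leg n).eval (y / 2 + 1 / 2)

lemma onb_continuous (n : ℕ) : Continuous (onb n) := by
  unfold onb
  have := (leg n).continuous
  fun_prop

lemma onb_bound (n : ℕ) (y : ℝ) (h : y ∈ Set.Icc (-1 : ℝ) 1) : onb n y ^ 2 ≤ 2 * n + 1 := by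
  unfold onb
  rw [mul_pow, Real.sq_sqrt (by positivity)]
  have := leg_bound n (y / 2 + 1 / 2) (by linarith [h.1]) (by linarith [h.2])
  have h2 : (0 : ℝ) ≤ 2 * n + 1 := by positivity
  nlinarith

lemma onb_orth (n k : ℕ) : ∫ y, onb n y * onb k y ∂rho1 = if n = k then 1 else 0 := by
  have e : ∫ y, onb n y * onb k y ∂rho1 = √(2 * n + 1) * √(2 * k + 1) * polyInt (leg n * leg k) := by
    unfold rho1
    rw [integral_smul_measure, integral_Icc_eq_integral_Ioc,
      ← intervalIntegral.integral_of_le (by norm_num)]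
    have : ∀ y, onb n y * onb k y = √(2 * n + 1) * √(2 * k + 1) *
        (fun x => (leg n * leg k).eval x) (y / 2 + 1 / 2) := by
      intro y; unfold onb; simp only [Polynomial.eval_mul]; ring
    simp_rw [this]
    rw [intervalIntegral.integral_const_mul, intervalIntegral.integral_comp_div_add
      (fun x => (leg n * leg k).eval x) (c := 2) (by norm_num)]
    unfold polyInt
    norm_num
    ring
  rw [e]
  split_ifs with h
  · subst h
    rw [Real.mul_self_sqrt (by positivity), leg_norm]
  · rw [leg_orth h, mul_zero]

open Polynomial in
lemma pow_expand (n : ℕ) : ∃ c : ℕ → ℝ, ∀ y : ℝ,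
    y ^ n = ∑ k ∈ Finset.range (n + 1), c k * onb k y := by
  obtain ⟨c, hc⟩ := leg_span n ((C 2 * X - C 1) ^ n) (by
    refine natDegree_pow_le.trans ?_
    have : (C 2 * X - C 1 : Polynomial ℝ).natDegree ≤ 1 := by compute_degree
    nlinarith)
  refine ⟨fun k => c k / √(2 * k + 1), fun y => ?_⟩
  have h := congrArg (eval (y / 2 + 1 / 2)) hc
  rw [eval_finsetSum] at h
  simp only [eval_pow, eval_sub, eval_mul, eval_C, eval_X] at h
  have e : 2 * (y / 2 + 1 / 2) - 1 = y := by ring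
  rw [e] at h
  rw [h]
  apply Finset.sum_congr rfl
  intro k _
  unfold onb
  have : √(2 * (k:ℝ) + 1) ≠ 0 := by positivity
  field_simp

instance rho1_prob : IsProbabilityMeasure rho1 := by
  constructor
  unfold rho1
  simp
  norm_num
  exact ENNReal.inv_mul_cancel (by norm_num) (by norm_num)

lemma uniformCube_eq (d : ℕ) : uniformCube d = Measure.pi fun _ : Fin d => rho1 := rfl

instance uniformCube_prob (d : ℕ) : IsProbabilityMeasure (uniformCube d) := by
  rw [uniformCube_eq]; infer_instance

lemma ae_cube (d : ℕ) : ∀ᵐ y ∂(uniformCube d), y ∈ cube d := by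
  have h : ∀ᵐ x ∂rho1, x ∈ Set.Icc (-1 : ℝ) 1 := by
    unfold rho1
    exact Measure.ae_smul_measure (ae_restrict_mem measurableSet_Icc) _
  have h2 : ∀ i : Fin d, ∀ᵐ y ∂(uniformCube d), y i ∈ Set.Icc (-1 : ℝ) 1 := by
    intro i
    rw [uniformCube_eq]
    exact (Measure.quasiMeasurePreserving_eval (fun _ : Fin d => rho1) i).ae h
  filter_upwards [ae_all_iff.2 h2] with y hy
  exact fun i _ => hy i

lemma integrable_rho1 (f : ℝ → ℝ) (hf : Continuous f) : Integrable f rho1 := by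
  unfold rho1
  exact Integrable.smul_measure (hf.integrableOn_Icc) (by norm_num)

/-- tensor product basis -/
noncomputable def tens {d : ℕ} (ν : Fin d → ℕ) (y : Fin d → ℝ) : ℝ := ∏ j, onb (ν j) (y j)

lemma tens_integrable {d : ℕ} (ν μ : Fin d → ℕ) :
    Integrable (fun y => tens ν y * tens μ y) (uniformCube d) := by
  unfold tens
  simp_rw [← Finset.prod_mul_distrib]
  rw [uniformCube_eq]
  exact Integrable.fintype_prod (f := fun j y => onb (ν j) y * onb (μ j) y) 
    (fun j => integrable_rho1 _ ((onb_continuous _).mul (onb_continuous _)))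

lemma tens_orth {d : ℕ} (ν μ : Fin d → ℕ) :
    ∫ y, tens ν y * tens μ y ∂(uniformCube d) = if ν = μ then 1 else 0 := by
  unfold tens
  simp_rw [← Finset.prod_mul_distrib]
  rw [uniformCube_eq,
    integral_fintype_prod_eq_prod (fun j y => onb (ν j) y * onb (μ j) y)]
  simp_rw [onb_orth]
  split_ifs with h
  · subst h; simp
  · obtain ⟨j, hj⟩ := Function.ne_iff.1 h
    exact Finset.prod_eq_zero (Finset.mem_univ j) (by simp [hj])

lemma card_max (n : ℕ) :
    (((Finset.range (n+1)) ×ˢ (Finset.range (n+1))).filter (fun p => max p.1 p.2 = n)).card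
      = 2 * n + 1 := by
  have h : ((Finset.range (n+1)) ×ˢ (Finset.range (n+1))).filter (fun p => max p.1 p.2 = n)
      = ((Finset.range (n+1)) ×ˢ (Finset.range (n+1))) \ ((Finset.range n) ×ˢ (Finset.range n)) := by
    ext ⟨a, b⟩
    simp
    omega
  rw [h, Finset.card_sdiff_of_subset]
  · simp only [Finset.card_product, Finset.card_range]
    have : (n+1)*(n+1) = n * n + (2 * n + 1) := by ring
    omega
  · intro p; simp; omega

lemma sum_prod_le {d : ℕ} (Λ : Finset (Fin d → ℕ)) (hΛ : DownwardClosed Λ) :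
    ∑ ν ∈ Λ, ∏ j, (2 * ν j + 1) ≤ Λ.card ^ 2 := by
  classical
  let F : (Fin d → ℕ) → Finset (Fin d → ℕ × ℕ) := fun ν =>
    Fintype.piFinset fun j =>
      ((Finset.range (ν j+1)) ×ˢ (Finset.range (ν j+1))).filter (fun p => max p.1 p.2 = ν j)
  have hF : ∀ ν, (F ν).card = ∏ j, (2 * ν j + 1) := by
    intro ν
    simp only [F]
    rw [Fintype.card_piFinset]
    simp_rw [card_max]
  have hmem : ∀ ν p, p ∈ F ν → ∀ j, max (p j).1 (p j).2 = ν j := by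
    intro ν p hp j
    exact (Finset.mem_filter.1 (Fintype.mem_piFinset.1 hp j)).2
  calc ∑ ν ∈ Λ, ∏ j, (2 * ν j + 1) = ∑ ν ∈ Λ, (F ν).card := by simp_rw [hF]
    _ = (Λ.biUnion F).card := by
      rw [Finset.card_biUnion]
      intro ν _ μ _ hne
      rw [Function.onFun, Finset.disjoint_left]
      intro p hp hq
      exact hne (funext fun j => (hmem ν p hp j).symm.trans (hmem μ p hq j))
    _ ≤ (Λ ×ˢ Λ).card := by
      apply Finset.card_le_card_of_injOn
        (fun p => ((fun j => (p j).1 : Fin d → ℕ), (fun j => (p j).2 : Fin d → ℕ)))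
      · intro p hp
        obtain ⟨ν, hν, hp⟩ := Finset.mem_biUnion.1 hp
        have := hmem ν p hp
        refine Finset.mem_coe.2 (Finset.mem_product.2 ⟨hΛ ν hν _ fun j => ?_, hΛ ν hν _ fun j => ?_⟩)
        · exact (le_max_left _ _).trans (this j).le
        · exact (le_max_right _ _).trans (this j).le
      · intro p _ q _ h
        have h1 := congrArg Prod.fst h
        have h2 := congrArg Prod.snd h
        funext j
        exact Prod.ext (congrFun h1 j) (congrFun h2 j)
    _ = Λ.card ^ 2 := by rw [Finset.card_product, pow_two]

lemma tens_sum_le {d : ℕ} (Λ : Finset (Fin d → ℕ)) (hΛ : DownwardClosed Λ)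
    (y : Fin d → ℝ) (hy : y ∈ cube d) : ∑ ν ∈ Λ, tens ν y ^ 2 ≤ (Λ.card : ℝ) ^ 2 := by
  calc ∑ ν ∈ Λ, tens ν y ^ 2 ≤ ∑ ν ∈ Λ, ∏ j, (2 * (ν j : ℝ) + 1) := by
        apply Finset.sum_le_sum
        intro ν _
        unfold tens
        rw [← Finset.prod_pow]
        exact Finset.prod_le_prod (fun _ _ => sq_nonneg _)
          (fun j _ => onb_bound _ _ (hy j (Set.mem_univ j)))
    _ ≤ (Λ.card : ℝ) ^ 2 := by exact_mod_cast sum_prod_le Λ hΛ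

lemma poly_expand {d : ℕ} {V : Type*} [AddCommGroup V] [Module ℝ V]
    (Λ : Finset (Fin d → ℕ)) (hΛ : DownwardClosed Λ) (a : (Fin d → ℕ) → V) :
    ∃ b : (Fin d → ℕ) → V, ∀ y, polyEval Λ a y = ∑ ν ∈ Λ, tens ν y • b ν := by
  classical
  choose c hc using pow_expand
  let t : (Fin d → ℕ) → (Fin d → ℕ) → ℝ := fun μ ν => if ν ≤ μ then ∏ j, c (μ j) (ν j) else 0
  refine ⟨fun ν => ∑ μ ∈ Λ, t μ ν • a μ, fun y => ?_⟩
  have hmon : ∀ μ ∈ Λ, ∏ j, y j ^ μ j = ∑ ν ∈ Λ, tens ν y * t μ ν := by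
    intro μ hμ
    have : ∏ j, y j ^ μ j = ∏ j, ∑ k ∈ Finset.range (μ j + 1), c (μ j) k * onb k (y j) :=
      Finset.prod_congr rfl fun j _ => hc (μ j) (y j)
    rw [this, Finset.prod_univ_sum]
    have hle : ∀ ν, ν ∈ Fintype.piFinset (fun j => Finset.range (μ j + 1)) ↔ ν ≤ μ := by
      intro ν
      simp [Fintype.mem_piFinset, Pi.le_def, Nat.lt_succ_iff]
    rw [← Finset.sum_subset (s₁ := Fintype.piFinset (fun j => Finset.range (μ j + 1)))
      (s₂ := Λ) (f := fun ν => tens ν y * t μ ν)]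
    · apply Finset.sum_congr rfl
      intro ν hν
      simp only [t, if_pos ((hle ν).1 hν), tens]
      rw [Finset.prod_mul_distrib, mul_comm]
    · intro ν hν
      exact hΛ μ hμ ν ((hle ν).1 hν)
    · intro ν _ hν
      simp only [t]
      rw [if_neg (fun h => hν ((hle ν).2 h)), mul_zero]
  unfold polyEval
  calc _ = ∑ μ ∈ Λ, ∑ ν ∈ Λ, (tens ν y * t μ ν) • a μ := by
        apply Finset.sum_congr rfl
        intro μ hμ
        rw [hmon μ hμ, Finset.sum_smul]
    _ = _ := by
        rw [Finset.sum_comm]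
        simp_rw [Finset.smul_sum, smul_smul]

lemma nikolskii {d : ℕ} {V : Type*} [NormedAddCommGroup V] [InnerProductSpace ℝ V]
    (Λ : Finset (Fin d → ℕ)) (hΛ : DownwardClosed Λ) (a : (Fin d → ℕ) → V) :
    Integrable (fun y => ‖polyEval Λ a y‖ ^ 2) (uniformCube d) ∧
    ∀ y ∈ cube d, ‖polyEval Λ a y‖ ^ 2 ≤
      (Λ.card : ℝ) ^ 2 * ∫ x, ‖polyEval Λ a x‖ ^ 2 ∂(uniformCube d) := by
  classical
  obtain ⟨b, hb⟩ := poly_expand Λ hΛ a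
  have hsq : ∀ x, ‖polyEval Λ a x‖ ^ 2 =
      ∑ ν ∈ Λ, ∑ μ ∈ Λ, tens ν x * tens μ x * inner ℝ (b ν) (b μ) := by
    intro x
    rw [← real_inner_self_eq_norm_sq, hb, sum_inner]
    apply Finset.sum_congr rfl
    intro ν _
    rw [inner_sum]
    apply Finset.sum_congr rfl
    intro μ _
    rw [real_inner_smul_left, real_inner_smul_right]
    ring
  have hIntg : ∀ ν μ, Integrable (fun x => tens ν x * tens μ x * inner ℝ (b ν) (b μ))
      (uniformCube d) := fun ν μ => (tens_integrable ν μ).mul_const _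
  have hI : ∫ x, ‖polyEval Λ a x‖ ^ 2 ∂(uniformCube d) = ∑ ν ∈ Λ, ‖b ν‖ ^ 2 := by
    simp_rw [hsq]
    rw [integral_finset_sum _ (fun ν _ => integrable_finset_sum _ fun μ _ => hIntg ν μ)]
    apply Finset.sum_congr rfl
    intro ν hν
    rw [integral_finset_sum _ (fun μ _ => hIntg ν μ)]
    simp_rw [integral_mul_const, tens_orth]
    simp [hν]
  constructor
  · simp_rw [hsq]
    exact integrable_finset_sum _ (fun ν _ => integrable_finset_sum _ fun μ _ => hIntg ν μ)
  · intro y hy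
    rw [hI, hb]
    have h1 : ‖∑ ν ∈ Λ, tens ν y • b ν‖ ≤ ∑ ν ∈ Λ, |tens ν y| * ‖b ν‖ := by
      refine (norm_sum_le _ _).trans (le_of_eq ?_)
      simp_rw [norm_smul, Real.norm_eq_abs]
    calc _ ≤ (∑ ν ∈ Λ, |tens ν y| * ‖b ν‖) ^ 2 := by gcongr
      _ ≤ (∑ ν ∈ Λ, |tens ν y| ^ 2) * ∑ ν ∈ Λ, ‖b ν‖ ^ 2 := Finset.sum_mul_sq_le_sq_mul_sq _ _ _
      _ ≤ _ := by
        simp_rw [sq_abs]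
        gcongr
        exact tens_sum_le Λ hΛ y hy

lemma polyEval_continuous {d : ℕ} {V : Type*} [NormedAddCommGroup V] [InnerProductSpace ℝ V]
    (Λ : Finset (Fin d → ℕ)) (a : (Fin d → ℕ) → V) : Continuous (polyEval Λ a) := by
  unfold polyEval
  fun_prop

theorem statement9 {d : ℕ} (hd : 0 < d) {V : Type*} [NormedAddCommGroup V]
    [InnerProductSpace ℝ V]
    (Λ : Finset (Fin d → ℕ)) (hΛ : DownwardClosed Λ)
    (m : ℕ) (hm : 1 ≤ m) (hcard : Λ.card = m) (a : (Fin d → ℕ) → V)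
    (M1 : ℝ) (hM1 : M1 = ⨆ y ∈ cube d, ‖polyEval Λ a y‖) (hpos : 0 < M1) :
    ENNReal.ofReal (3 / (4 * (m : ℝ) ^ 2)) ≤
      uniformCube d {y ∈ cube d | M1 / (2 * m) ≤ ‖polyEval Λ a y‖} := by
  obtain ⟨hIntg, hnik⟩ := nikolskii Λ hΛ a
  rw [hcard] at hnik
  set I := ∫ x, ‖polyEval Λ a x‖ ^ 2 ∂(uniformCube d) with hI
  have hI0 : 0 ≤ I := integral_nonneg fun x => by positivity
  have hm0 : (0 : ℝ) < m := by exact_mod_cast hm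
  have hb : ∀ y, (⨆ (_ : y ∈ cube d), ‖polyEval Λ a y‖) ≤ m * √I := by
    intro y
    apply Real.iSup_le
    · intro hy
      apply le_of_sq_le_sq _ (by positivity)
      rw [mul_pow, Real.sq_sqrt hI0]
      exact hnik y hy
    · positivity
  have hle : M1 ≤ m * √I := by
    rw [hM1]
    exact Real.iSup_le hb (by positivity)
  have hMI : M1 ^ 2 ≤ m ^ 2 * I := by
    calc M1 ^ 2 ≤ (m * √I) ^ 2 := by gcongr
      _ = _ := by rw [mul_pow, Real.sq_sqrt hI0]
  have hsup : ∀ y ∈ cube d, ‖polyEval Λ a y‖ ≤ M1 := by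
    intro y hy
    rw [hM1]
    refine le_trans ?_ (le_ciSup (f := fun y => ⨆ (_ : y ∈ cube d), ‖polyEval Λ a y‖)
      ⟨m * √I, by rintro _ ⟨z, rfl⟩; exact hb z⟩ y)
    simp [hy]
  set S := {y ∈ cube d | M1 / (2 * m) ≤ ‖polyEval Λ a y‖} with hS
  have hcube : MeasurableSet (cube d) := MeasurableSet.univ_pi fun _ => measurableSet_Icc
  have hSm : MeasurableSet S :=
    hcube.inter (measurableSet_le measurable_const (polyEval_continuous Λ a).norm.measurable)
  have hfin : I ≤ M1 ^ 2 * (uniformCube d).real S + (M1 / (2 * m)) ^ 2 := by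
    have e : ∫ x, (S.indicator (fun _ => M1 ^ 2) x + (M1 / (2 * m)) ^ 2) ∂(uniformCube d)
        = M1 ^ 2 * (uniformCube d).real S + (M1 / (2 * m)) ^ 2 := by
      rw [integral_add ((integrable_const _).indicator hSm) (integrable_const _),
        integral_indicator_const _ hSm]
      simp [mul_comm]
    rw [← e, hI]
    apply integral_mono_ae hIntg
      (((integrable_const _).indicator hSm).add (integrable_const _))
    filter_upwards [ae_cube d] with y hy
    show ‖polyEval Λ a y‖ ^ 2 ≤ S.indicator (fun _ => M1 ^ 2) y + (M1 / (2 * m)) ^ 2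
    by_cases hyS : y ∈ S
    · rw [Set.indicator_of_mem hyS]
      have := hsup y hy
      have : ‖polyEval Λ a y‖ ^ 2 ≤ M1 ^ 2 := by gcongr
      have := sq_nonneg (M1 / (2 * m))
      linarith
    · rw [Set.indicator_of_notMem hyS, zero_add]
      have : ‖polyEval Λ a y‖ ≤ M1 / (2 * m) := by
        by_contra hcon
        exact hyS ⟨hy, (not_le.1 hcon).le⟩
      gcongr
  rw [← ofReal_measureReal]
  apply ENNReal.ofReal_le_ofReal
  rw [div_le_iff₀ (by positivity)]
  have h2 : (M1 / (2 * m)) ^ 2 * (4 * m ^ 2) = M1 ^ 2 := by field_simp; ring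
  have h3 : M1 ^ 2 * 3 ≤ M1 ^ 2 * ((uniformCube d).real S * (4 * m ^ 2)) := by
    have := mul_le_mul_of_nonneg_right hfin (by positivity : (0:ℝ) ≤ 4 * m ^ 2)
    nlinarith
  exact le_of_mul_le_mul_left h3 (by positivity)
end
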